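/- Let E belong to the class A(λ,n,m) and let F = ⋃_{j=1}^t g_j(F) be a dust-like self-similar set, where g_j has contraction ratio r_j, such that E and F are Lipschitz equivalent. Then there exist a ratio r ∈ (0,1) and positive integers k and k₁ ≤ k₂ ≤ ⋯ ≤ k_t such that λ = r^k and r_j = r^{k_j} for every j = 1, …, t. Equivalently, log r_j / log λ ∈ ℚ for every j. -/

import Mathlib

open MeasureTheory Polynomial

/-- The class `𝒜(λ, n, m)` of self-similar subsets of `ℝ` with `m` exact overlaps,
generated by `n` similitudes `fᵢ x = λ x + bᵢ` of the same ratio `λ`. -/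
def IsInClassA (lam : ℝ) (n m : ℕ) (E : Set ℝ) : Prop :=
  lam ∈ Set.Ioo (0 : ℝ) 1 ∧ 1 ≤ m ∧ m + 2 ≤ n ∧
  ∃ b : ℕ → ℝ,
    b 0 = 0 ∧ b (n - 1) = 1 - lam ∧
    (∀ i, i + 1 < n → b i < b (i + 1)) ∧
    (∀ i, i + 1 < n →
      (Set.Icc (b i) (b i + lam) ∩ Set.Icc (b (i + 1)) (b (i + 1) + lam)).Nonempty →
        volume (Set.Icc (b i) (b i + lam) ∩ Set.Icc (b (i + 1)) (b (i + 1) + lam)) = 0 ∨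
        volume (Set.Icc (b i) (b i + lam) ∩ Set.Icc (b (i + 1)) (b (i + 1) + lam)) =
          ENNReal.ofReal (lam * lam)) ∧
    {i : ℕ | i + 1 < n ∧
      volume (Set.Icc (b i) (b i + lam) ∩ Set.Icc (b (i + 1)) (b (i + 1) + lam)) =
        ENNReal.ofReal (lam * lam)}.ncard = m ∧
    E.Nonempty ∧ IsCompact E ∧
    E = ⋃ i ∈ Finset.range n, (fun x => lam * x + b i) '' E

/-- A dust-like self-similar set in `ℝ^d`: the attractor of `t ≥ 2` contracting similitudes
whose images are pairwise disjoint (strong separation condition). -/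
def IsDustLike {d : ℕ} (F : Set (EuclideanSpace ℝ (Fin d))) : Prop :=
  F.Nonempty ∧ IsCompact F ∧
  ∃ t : ℕ, 2 ≤ t ∧
    ∃ (g : Fin t → EuclideanSpace ℝ (Fin d) → EuclideanSpace ℝ (Fin d)) (r : Fin t → ℝ),
      (∀ j, r j ∈ Set.Ioo (0 : ℝ) 1) ∧
      (∀ j x y, dist (g j x) (g j y) = r j * dist x y) ∧
      F = ⋃ j, g j '' F ∧
      (∀ j j', j ≠ j' → Disjoint (g j '' F) (g j' '' F))

/-- Lipschitz equivalence of two sets in (possibly different) metric spaces. -/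
def LipEquiv {X Y : Type*} [MetricSpace X] [MetricSpace Y] (A : Set X) (B : Set Y) : Prop :=
  ∃ f : A → B, Function.Bijective f ∧ ∃ C : ℝ, 0 < C ∧
    ∀ x y : A, C⁻¹ * dist x y ≤ dist (f x) (f y) ∧ dist (f x) (f y) ≤ C * dist x y

/-! Let `s` be the similarity dimension of `F`. On the tree of words, the density
`ρ(w) = ℋˢ(A_w) / R_w ^ s`, where `A_w ⊆ E` is the image of the piece of `F` addressed by `w` and
`R_w` is the ratio of that piece, is positive at the root, bounded, and harmonic for the weights
`r_j ^ s`.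

Strong separation makes each `A_w` a union of pieces of `E` of level `l` with `lam ^ l`
comparable to `R_w`. Since pieces of `E` at bounded scaled distance have only finitely many
relative positions, `ℋˢ(A_w) ∈ lam ^ (l s) · V` for a fixed finite set `V`, and so
`ρ(jw) / ρ(w)` takes finitely many values. A bounded harmonic function with this property is
constant on the subtree below any word at which it is close enough to its supremum. Along
`w, jw, jjw, …` this gives `c · r_j ^ (k s) ∈ lam ^ (l s) · V` for all `k`, and two values of `k`
that share an element of `V` yield a multiplicative relation between `r_j` and `lam`. -/

section

open Set Filter Topology PiNat
open scoped NNReal ENNReal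

section Commensurability

theorem exists_gt_forall_lt_imp_le {Q : Set ℝ} (hQ : Q.Finite) (a : ℝ) :
    ∃ b > a, ∀ q ∈ Q, q < b → q ≤ a := by
  have h : ∀ᶠ b in 𝓝[>] a, ∀ q ∈ Q, q < b → q ≤ a := by
    refine (eventually_all_finite hQ).2 fun q _ => ?_
    rcases le_or_gt q a with hqa | haq
    · exact Eventually.of_forall fun _ _ => hqa
    · filter_upwards [Ioo_mem_nhdsGT haq] with b hb hqb
      exact absurd hqb hb.2.not_gt
  obtain ⟨b, hb, hab⟩ := (h.and self_mem_nhdsWithin).exists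
  exact ⟨b, hab, hb⟩

variable {ι : Type*}

/-- The product of the numbers `r j` over the letters `j` of the word `w`. If `r` lists the ratios
of a self-similar set, this is the contraction ratio of the piece addressed by `w`. -/
def wordRatio (r : ι → ℝ) (w : List ι) : ℝ := (w.map r).prod

@[simp]
theorem wordRatio_nil (r : ι → ℝ) : wordRatio r [] = 1 := rfl

@[simp]
theorem wordRatio_cons (r : ι → ℝ) (j : ι) (w : List ι) :
    wordRatio r (j :: w) = r j * wordRatio r w := by
  simp [wordRatio]

theorem wordRatio_const (c : ℝ) (w : List ι) : wordRatio (fun _ => c) w = c ^ w.length := by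
  simp [wordRatio]

theorem wordRatio_pos {r : ι → ℝ} (hr : ∀ j, 0 < r j) (w : List ι) : 0 < wordRatio r w :=
  List.prod_pos (by simpa using fun j _ => hr j)

theorem wordRatio_le_pow_length {r : ι → ℝ} {c : ℝ} (hr : ∀ j, 0 < r j) (hc : ∀ j, r j ≤ c)
    (w : List ι) : wordRatio r w ≤ c ^ w.length := by
  induction w with
  | nil => simp
  | cons j w ih =>
    rw [wordRatio_cons, List.length_cons, pow_succ']
    exact mul_le_mul (hc j) ih (wordRatio_pos hr w).le ((hr j).le.trans (hc j))

theorem wordRatio_rpow {r : ι → ℝ} (hr : ∀ j, 0 < r j) (s : ℝ) (w : List ι) :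
    wordRatio (fun j => r j ^ s) w = wordRatio r w ^ s := by
  induction w with
  | nil => simp
  | cons j w ih => rw [wordRatio_cons, wordRatio_cons, ih,
      Real.mul_rpow (hr j).le (wordRatio_pos hr w).le]

-- Near the supremum no child value can be larger, since the possible ratios leave a gap above `1`;
-- the mean value property then forces every child to take the same value.
theorem exists_forall_append_eq_of_harmonic [Fintype ι] {p : ι → ℝ} (hp : ∀ j, 0 < p j)
    (hp1 : ∑ j, p j = 1) {ρ : List ι → ℝ} (hρ : ∀ w, ∑ j, p j * ρ (j :: w) = ρ w)
    (hbdd : BddAbove (range ρ)) (h0 : 0 < ρ []) {Q : Set ℝ} (hQ : Q.Finite)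
    (hratio : ∀ w j, ρ (j :: w) / ρ w ∈ Q) :
    ∃ w, 0 < ρ w ∧ ∀ u, ρ (u ++ w) = ρ w := by
  obtain ⟨b, hb, hbQ⟩ := exists_gt_forall_lt_imp_le hQ 1
  have hb0 : 0 < b := one_pos.trans hb
  have hle : ∀ w, ρ w ≤ sSup (range ρ) := fun w => le_csSup hbdd ⟨w, rfl⟩
  have hS : 0 < sSup (range ρ) := h0.trans_le (hle [])
  obtain ⟨_, ⟨w, rfl⟩, hw⟩ := exists_lt_of_lt_csSup (range_nonempty ρ) (div_lt_self hS hb)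
  have eq_of_near_sup : ∀ v, sSup (range ρ) / b < ρ v → ∀ j, ρ (j :: v) = ρ v := by
    intro v hv j
    have hv0 : 0 < ρ v := (div_pos hS hb0).trans hv
    have child_le : ∀ i, ρ (i :: v) ≤ ρ v := fun i => by
      refine (div_le_one hv0).1 (hbQ _ (hratio v i) ?_)
      rw [div_lt_iff₀ hv0]
      exact (hle _).trans_lt ((div_lt_iff₀' hb0).1 hv)
    have hsum : ∑ i, p i * ρ (i :: v) = ∑ i, p i * ρ v := by
      rw [hρ, ← Finset.sum_mul, hp1, one_mul]
    exact mul_left_cancel₀ (hp j).ne' ((Finset.sum_eq_sum_iff_of_le fun i _ =>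
      mul_le_mul_of_nonneg_left (child_le i) (hp i).le).1 hsum j (Finset.mem_univ j))
  refine ⟨w, (div_pos hS hb0).trans hw, fun u => ?_⟩
  induction u with
  | nil => rfl
  | cons j u ih => rw [List.cons_append, eq_of_near_sup _ (ih.symm ▸ hw), ih]

theorem exists_rat_log_div_log_eq {x y c : ℝ} (hx : 0 < x) (hy : y ∈ Ioo (0 : ℝ) 1) (hc : 0 < c)
    {V : Set ℝ} (hV : V.Finite) (h : ∀ k : ℕ, ∃ l : ℕ, ∃ a ∈ V, c * x ^ k = y ^ l * a) :
    ∃ q : ℚ, Real.log x / Real.log y = q := by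
  choose l a haV ha using h
  have hlog : ∀ k : ℕ, Real.log c + k * Real.log x = l k * Real.log y + Real.log (a k) := by
    intro k
    have hyl : 0 < y ^ l k := pow_pos hy.1 _
    have hak : 0 < a k := pos_of_mul_pos_right (ha k ▸ mul_pos hc (pow_pos hx k)) hyl.le
    rw [← Real.log_pow, ← Real.log_pow, ← Real.log_mul hc.ne' (pow_pos hx k).ne',
      ← Real.log_mul hyl.ne' hak.ne', ha]
  have : Finite V := hV
  obtain ⟨k, k', hne, heq⟩ := Finite.exists_ne_map_eq_of_infinite fun k => (⟨a k, haV k⟩ : V)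
  have heq : a k = a k' := congrArg Subtype.val heq
  have hkk' : (k : ℝ) - k' ≠ 0 := sub_ne_zero.2 (Nat.cast_injective.ne hne)
  refine ⟨((l k : ℚ) - l k') / (k - k'), ?_⟩
  push_cast
  rw [div_eq_div_iff (Real.log_neg hy.1 hy.2).ne hkk']
  have hk := hlog k
  rw [heq] at hk
  linarith [hlog k']

theorem exists_rat_log_div_log_of_additive [Fintype ι] {p : ι → ℝ} (hp : ∀ j, 0 < p j)
    (hp1 : ∑ j, p j = 1) {y : ℝ} (hy : y ∈ Ioo (0 : ℝ) 1) {M : List ι → ℝ} (hM0 : 0 < M [])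
    (hadd : ∀ w, M w = ∑ j, M (j :: w)) {C : ℝ} (hMC : ∀ w, M w ≤ C * wordRatio p w)
    {V : Set ℝ} (hV : V.Finite)
    (hval : ∀ w, ∃ l : ℕ, (∃ a ∈ V, M w = y ^ l * a) ∧ ∀ j, ∃ a ∈ V, M (j :: w) = y ^ l * a)
    (j : ι) : ∃ q : ℚ, Real.log (p j) / Real.log y = q := by
  have hR : ∀ w, 0 < wordRatio p w := wordRatio_pos hp
  have harmonic : ∀ w, ∑ i, p i * (M (i :: w) / wordRatio p (i :: w)) = M w / wordRatio p w := by
    intro w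
    rw [hadd w, Finset.sum_div]
    refine Finset.sum_congr rfl fun i _ => ?_
    rw [wordRatio_cons, mul_div_assoc', mul_div_mul_left _ _ (hp i).ne']
  have bounded : BddAbove (range fun w => M w / wordRatio p w) :=
    ⟨C, by rintro _ ⟨w, rfl⟩; exact (div_le_iff₀ (hR w)).2 (hMC w)⟩
  have child_ratio_mem : ∀ w i, M (i :: w) / wordRatio p (i :: w) / (M w / wordRatio p w) ∈
      (fun z : ℝ × ℝ × ι => z.1 / z.2.1 / p z.2.2) '' (V ×ˢ V ×ˢ univ) := by
    intro w i
    obtain ⟨l, ⟨a, ha, hMa⟩, hchild⟩ := hval w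
    obtain ⟨a', ha', hMa'⟩ := hchild i
    refine ⟨(a', a, i), ⟨ha', ha, trivial⟩, ?_⟩
    have hyl : y ^ l ≠ 0 := (pow_pos hy.1 l).ne'
    rw [hMa, hMa', wordRatio_cons, mul_comm (p i), ← div_div, div_right_comm _ (p i),
      div_div_div_cancel_right₀ (hR w).ne', mul_div_mul_left _ _ hyl]
  obtain ⟨w, hw, hconst⟩ := exists_forall_append_eq_of_harmonic hp hp1 harmonic bounded
    (div_pos hM0 (hR [])) ((hV.prod (hV.prod finite_univ)).image _) child_ratio_mem
  refine exists_rat_log_div_log_eq (hp j) hy (c := M w) ?_ hV fun k => ?_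
  · simpa [hR w] using hw
  · obtain ⟨l, ⟨a, ha, hMa⟩, -⟩ := hval (List.replicate k j ++ w)
    refine ⟨l, a, ha, ?_⟩
    rw [← hMa, ← div_mul_cancel₀ (M (_ ++ w)) (hR _).ne', hconst]
    have : wordRatio p (List.replicate k j ++ w) = p j ^ k * wordRatio p w := by simp [wordRatio]
    rw [this, mul_left_comm, div_mul_cancel₀ _ (hR w).ne', mul_comm]

theorem exists_common_pow_of_rat_log_div_log [Finite ι] {r : ι → ℝ}
    (hr : ∀ j, r j ∈ Ioo (0 : ℝ) 1) {x : ℝ} (hx : x ∈ Ioo (0 : ℝ) 1)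
    (h : ∀ j, ∃ q : ℚ, Real.log (r j) / Real.log x = q) :
    ∃ r₀ ∈ Ioo (0 : ℝ) 1, ∃ k : ℕ, 0 < k ∧ ∃ ks : ι → ℕ,
      (∀ j, 0 < ks j) ∧ x = r₀ ^ k ∧ ∀ j, r j = r₀ ^ ks j := by
  cases nonempty_fintype ι
  choose q hq using h
  have hlx : Real.log x < 0 := Real.log_neg hx.1 hx.2
  have hq0 : ∀ j, 0 < q j := fun j => by
    have : (0 : ℝ) < q j := hq j ▸ div_pos_of_neg_of_neg (Real.log_neg (hr j).1 (hr j).2) hlx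
    exact_mod_cast this
  set N : ℕ := ∏ j, (q j).den
  have hN : 0 < N := Finset.prod_pos fun j _ => (q j).den_pos
  have hks : ∀ j, ∃ c : ℕ, (c : ℚ) = q j * N := fun j => by
    obtain ⟨d, hd⟩ : (q j).den ∣ N := Finset.dvd_prod_of_mem _ (Finset.mem_univ j)
    obtain ⟨a, ha⟩ := Int.eq_ofNat_of_zero_le (Rat.num_pos.2 (hq0 j)).le
    refine ⟨a * d, ?_⟩
    rw [hd, Nat.cast_mul, Nat.cast_mul, ← mul_assoc, Rat.mul_den_eq_num, ha, Int.cast_natCast]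
  choose ks hks using hks
  have hroot : ∀ c : ℕ, (x ^ (1 / N : ℝ)) ^ c = x ^ (c / N : ℝ) := fun c => by
    rw [← Real.rpow_natCast, ← Real.rpow_mul hx.1.le, one_div_mul_eq_div]
  have hN' : (N : ℝ) ≠ 0 := Nat.cast_ne_zero.2 hN.ne'
  refine ⟨x ^ (1 / N : ℝ), ⟨Real.rpow_pos_of_pos hx.1 _,
    Real.rpow_lt_one hx.1.le hx.2 (by positivity)⟩, N, hN, ks, fun j => ?_, ?_, fun j => ?_⟩
  · have : (0 : ℚ) < ks j := hks j ▸ mul_pos (hq0 j) (Nat.cast_pos.2 hN)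
    exact_mod_cast this
  · rw [hroot, div_self hN', Real.rpow_one]
  · have hksN : (ks j : ℝ) = q j * N := by exact_mod_cast hks j
    rw [hroot, hksN, mul_div_cancel_right₀ _ hN', ← hq, Real.rpow_def_of_pos hx.1,
      mul_div_cancel₀ _ hlx.ne, Real.exp_log (hr j).1]

end Commensurability

section SelfSimilar

/-- `F` is the attractor of the finite or infinite family `g` of contracting similarities with
ratios `r`: a nonempty compact set that is the union of its images. The maps act on the whole
ambient space, which need not be complete. -/
structure IsSelfSimilar {ι X : Type*} [MetricSpace X] (g : ι → X → X) (r : ι → ℝ) (F : Set X) :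
    Prop where
  ratio_mem : ∀ j, r j ∈ Ioo (0 : ℝ) 1
  dist_map : ∀ j x y, dist (g j x) (g j y) = r j * dist x y
  nonempty : F.Nonempty
  isCompact : IsCompact F
  eq_iUnion : F = ⋃ j, g j '' F

/-- The composition of the maps `g j` along a word. As in `CantorScheme`, words are read backwards:
the child `j` of the word `w` is `j :: w`, and its map first applies `g j`, then the map of `w`. -/
def wordMap {ι X : Type*} (g : ι → X → X) : List ι → X → X
  | [] => id
  | j :: w => wordMap g w ∘ g j

/-- The piece of `F` addressed by a word. -/
def piece {ι X : Type*} (g : ι → X → X) (F : Set X) (w : List ι) : Set X := wordMap g w '' F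

theorem exists_pos_forall_le_dist {ι X : Type*} [Finite ι] [MetricSpace X] {K : ι → Set X}
    (hK : ∀ i, IsCompact (K i)) (hdisj : Pairwise fun i j => Disjoint (K i) (K j)) :
    ∃ δ > 0, ∀ i j, i ≠ j → ∀ x ∈ K i, ∀ y ∈ K j, δ ≤ dist x y := by
  have h : ∀ᶠ δ : ℝ in 𝓝[>] 0, ∀ i j, i ≠ j → ∀ x ∈ K i, ∀ y ∈ K j, δ ≤ dist x y := by
    refine eventually_all.2 fun i => eventually_all.2 fun j => eventually_imp_distrib_left.2 ?_
    intro hij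
    obtain ⟨δ, hδ, hsep⟩ := Metric.exists_pos_forall_lt_edist (hK i) (hK j).isClosed (hdisj hij)
    filter_upwards [Ioo_mem_nhdsGT (NNReal.coe_pos.2 hδ)] with ε hε x hx y hy
    have hxy : δ < nndist x y := by exact_mod_cast edist_nndist x y ▸ hsep x hx y hy
    exact hε.2.le.trans (NNReal.coe_lt_coe.2 hxy).le
  obtain ⟨δ, hδ, hpos⟩ := (h.and self_mem_nhdsWithin).exists
  exact ⟨δ, hpos, hδ⟩

namespace IsSelfSimilar

variable {ι X : Type*} [MetricSpace X] {g : ι → X → X} {r : ι → ℝ} {F : Set X}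

theorem ratio_pos (h : IsSelfSimilar g r F) (j : ι) : 0 < r j := (h.ratio_mem j).1

theorem wordRatio_pos (h : IsSelfSimilar g r F) (w : List ι) : 0 < wordRatio r w :=
  _root_.wordRatio_pos h.ratio_pos w

theorem nonempty_index (h : IsSelfSimilar g r F) : Nonempty ι := by
  obtain ⟨x, hx⟩ := h.nonempty
  rw [h.eq_iUnion] at hx
  exact ⟨(mem_iUnion.1 hx).choose⟩

theorem ratio_mem_of_const {c : ℝ} (h : IsSelfSimilar g (fun _ => c) F) : c ∈ Ioo (0 : ℝ) 1 :=
  h.ratio_mem h.nonempty_index.some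

theorem dist_wordMap (h : IsSelfSimilar g r F) (w : List ι) (x y : X) :
    dist (wordMap g w x) (wordMap g w y) = wordRatio r w * dist x y := by
  induction w generalizing x y with
  | nil => simp [wordMap]
  | cons j w ih =>
    rw [wordMap, Function.comp_apply, Function.comp_apply, ih, h.dist_map, wordRatio_cons]
    ring

theorem lipschitzWith_wordMap (h : IsSelfSimilar g r F) (w : List ι) :
    LipschitzWith (wordRatio r w).toNNReal (wordMap g w) :=
  LipschitzWith.of_dist_le' fun x y => (h.dist_wordMap w x y).le

theorem wordMap_injective (h : IsSelfSimilar g r F) (w : List ι) :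
    Function.Injective (wordMap g w) := fun x y hxy => by
  have hdist := h.dist_wordMap w x y
  rw [hxy, dist_self] at hdist
  exact dist_eq_zero.1 ((mul_eq_zero.1 hdist.symm).resolve_left (h.wordRatio_pos w).ne')

theorem piece_cons_subset (h : IsSelfSimilar g r F) (j : ι) (w : List ι) :
    piece g F (j :: w) ⊆ piece g F w := by
  rw [piece, wordMap, image_comp]
  exact image_mono ((subset_iUnion _ j).trans h.eq_iUnion.ge)

theorem piece_eq_iUnion_cons (h : IsSelfSimilar g r F) (w : List ι) :
    piece g F w = ⋃ j, piece g F (j :: w) := by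
  conv_lhs => rw [piece, h.eq_iUnion, image_iUnion]
  simp only [piece, wordMap, image_comp]

theorem piece_subset (h : IsSelfSimilar g r F) (w : List ι) : piece g F w ⊆ F := by
  induction w with
  | nil => simp [piece, wordMap]
  | cons j w ih => exact (h.piece_cons_subset j w).trans ih

theorem isCompact_piece (h : IsSelfSimilar g r F) (w : List ι) : IsCompact (piece g F w) :=
  h.isCompact.image (h.lipschitzWith_wordMap w).continuous

theorem nonempty_piece (h : IsSelfSimilar g r F) (w : List ι) : (piece g F w).Nonempty :=
  h.nonempty.image _

theorem dist_le_of_mem_piece (h : IsSelfSimilar g r F) {w : List ι} {x y : X}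
    (hx : x ∈ piece g F w) (hy : y ∈ piece g F w) :
    dist x y ≤ wordRatio r w * Metric.diam F := by
  obtain ⟨x, hx, rfl⟩ := hx
  obtain ⟨y, hy, rfl⟩ := hy
  rw [h.dist_wordMap]
  exact mul_le_mul_of_nonneg_left (Metric.dist_le_diam_of_mem h.isCompact.isBounded hx hy)
    (h.wordRatio_pos w).le

theorem piece_subset_of_lt_dist (h : IsSelfSimilar g r F) {A : Set X} {w : List ι}
    (hsep : ∀ x ∈ A, ∀ y ∈ F \ A, wordRatio r w * Metric.diam F < dist x y) {x : X} (hxA : x ∈ A)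
    (hxw : x ∈ piece g F w) : piece g F w ⊆ A := fun y hyw => by
  by_contra hyA
  exact (hsep x hxA y ⟨h.piece_subset w hyw, hyA⟩).not_ge (h.dist_le_of_mem_piece hxw hyw)

theorem exists_mem_piece (h : IsSelfSimilar g r F) {x : X} (hx : x ∈ F) (k : ℕ) :
    ∃ w : List ι, w.length = k ∧ x ∈ piece g F w := by
  induction k with
  | zero => exact ⟨[], rfl, by simpa [piece, wordMap] using hx⟩
  | succ k ih =>
    obtain ⟨w, hw, hxw⟩ := ih
    rw [h.piece_eq_iUnion_cons] at hxw
    obtain ⟨j, hj⟩ := mem_iUnion.1 hxw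
    exact ⟨j :: w, by simp [hw], hj⟩

theorem disjoint_piece_cons (h : IsSelfSimilar g r F)
    (hdisj : Pairwise fun i j => Disjoint (g i '' F) (g j '' F)) (w : List ι) :
    Pairwise fun i j => Disjoint (piece g F (i :: w)) (piece g F (j :: w)) := by
  intro i j hij
  simp only [piece, wordMap, image_comp]
  exact (disjoint_image_iff (h.wordMap_injective w)).2 (hdisj hij)

theorem exists_forall_mul_wordRatio_le_dist [Finite ι] (h : IsSelfSimilar g r F)
    (hdisj : Pairwise fun i j => Disjoint (g i '' F) (g j '' F)) :
    ∃ δ > 0, ∀ w, ∀ x ∈ piece g F w, ∀ y ∈ F \ piece g F w,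
      δ * wordRatio r w ≤ dist x y := by
  obtain ⟨δ, hδ, hsep⟩ := exists_pos_forall_le_dist (K := fun j => piece g F [j])
    (fun j => h.isCompact_piece [j]) (h.disjoint_piece_cons hdisj [])
  refine ⟨δ, hδ, fun w => ?_⟩
  induction w with
  | nil => intro x _ y hy; simp [piece, wordMap] at hy
  | cons j w ih =>
    intro x hx y hy
    by_cases hyw : y ∈ piece g F w
    · obtain ⟨i, hi⟩ := mem_iUnion.1 (h.piece_eq_iUnion_cons w ▸ hyw)
      have hji : j ≠ i := by rintro rfl; exact hy.2 hi
      obtain ⟨x, hx, rfl⟩ := hx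
      obtain ⟨y, hyF, rfl⟩ := hi
      have := hsep j i hji _ (mem_image_of_mem _ hx) _ (mem_image_of_mem _ hyF)
      rw [wordMap, wordMap, Function.comp_apply, Function.comp_apply, h.dist_wordMap, mul_comm]
      refine mul_le_mul ?_ this hδ.le (h.wordRatio_pos w).le
      rw [wordRatio_cons]
      exact mul_le_of_le_one_left (h.wordRatio_pos w).le (h.ratio_mem j).2.le
    · refine le_trans ?_ (ih x (h.piece_cons_subset j w hx) y ⟨hy.1, hyw⟩)
      rw [wordRatio_cons]
      exact mul_le_mul_of_nonneg_left
        (mul_le_of_le_one_left (h.wordRatio_pos w).le (h.ratio_mem j).2.le) hδ.le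

end IsSelfSimilar

end SelfSimilar

section SimilarityDimension

variable {ι : Type*}

theorem exists_sum_rpow_eq_one [Fintype ι] [Nontrivial ι] {r : ι → ℝ}
    (hr : ∀ j, r j ∈ Ioo (0 : ℝ) 1) : ∃ s : ℝ, 0 < s ∧ ∑ j, r j ^ s = 1 := by
  have hcont : Continuous fun s : ℝ => ∑ j, r j ^ s :=
    continuous_finsetSum _ fun j _ => Real.continuous_const_rpow (hr j).1.ne'
  have hlim : Tendsto (fun s : ℝ => ∑ j, r j ^ s) atTop (𝓝 0) := by
    simpa only [Finset.sum_const_zero] using tendsto_finsetSum Finset.univ fun j _ =>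
      tendsto_rpow_atTop_of_base_lt_one (r j) (by linarith [(hr j).1]) (hr j).2
  obtain ⟨u, hu1, hu0⟩ := ((hlim.eventually_lt_const one_pos).and (eventually_gt_atTop 0)).exists
  have h0 : 1 < ∑ j, r j ^ (0 : ℝ) := by simpa using Fintype.one_lt_card (α := ι)
  obtain ⟨s, hs, hsum⟩ := intermediate_value_Ioo' hu0.le hcont.continuousOn ⟨hu1, h0⟩
  exact ⟨s, hs.1, hsum⟩

theorem measure_le_mul_hausdorffMeasure {X : Type*} [MetricSpace X] [MeasurableSpace X]
    [BorelSpace X] {μ : Measure X} {s : ℝ} {c ε : ℝ≥0} (hc : c ≠ 0) (hε : 0 < ε)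
    (h : ∀ U, IsClosed U → ∀ a : ℝ≥0, Metric.ediam U < a → a ≤ ε → μ U ≤ c * (a : ℝ≥0∞) ^ s)
    (A : Set X) : μ A ≤ c * μH[s] A := by
  have hle : c⁻¹ • μ ≤ μH[s] := by
    obtain ⟨ε', hε', hlt⟩ := exists_between (ENNReal.coe_pos.2 hε)
    refine Measure.le_hausdorffMeasure s _ ε' hε' fun U hU => ?_
    replace hU : Metric.ediam U < ε := hU.trans_lt hlt
    rw [Measure.smul_apply, ENNReal.smul_def, smul_eq_mul, ENNReal.coe_inv hc,
      ENNReal.inv_mul_le_iff (by simpa) ENNReal.coe_ne_top]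
    refine (measure_mono subset_closure).trans ?_
    rw [← Metric.ediam_closure] at hU ⊢
    have : (𝓝[>] Metric.ediam (closure U)).NeBot := nhdsGT_neBot_of_exists_gt ⟨_, hU⟩
    have hlim : Tendsto (fun a : ℝ≥0∞ => c * a ^ s) (𝓝[>] Metric.ediam (closure U))
        (𝓝 (c * Metric.ediam (closure U) ^ s)) :=
      (ENNReal.Tendsto.const_mul (ENNReal.continuous_rpow_const.tendsto _)
        (.inr ENNReal.coe_ne_top)).mono_left nhdsWithin_le_nhds
    refine ge_of_tendsto hlim ?_
    filter_upwards [Ioo_mem_nhdsGT hU] with a ha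
    lift a to ℝ≥0 using (ha.2.trans ENNReal.coe_lt_top).ne
    exact h _ isClosed_closure a ha.1 (ENNReal.coe_lt_coe.1 ha.2).le
  have := hle A
  rwa [Measure.smul_apply, ENNReal.smul_def, smul_eq_mul, ENNReal.coe_inv hc,
    ENNReal.inv_mul_le_iff (by simpa) ENNReal.coe_ne_top] at this

theorem wordRatio_res (p : ι → ℝ) (ω : ℕ → ι) (k : ℕ) :
    wordRatio p (res ω k) = ∏ i ∈ Finset.range k, p (ω i) := by
  induction k with
  | zero => simp
  | succ k ih => rw [res_succ, wordRatio_cons, ih, Finset.prod_range_succ, mul_comm]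

theorem exists_measure_cylinder_eq_wordRatio [Fintype ι] [MeasurableSpace ι]
    [MeasurableSingletonClass ι] {p : ι → ℝ} (hp : ∀ j, 0 ≤ p j) (hsum : ∑ j, p j = 1) :
    ∃ ν : Measure (ℕ → ι), ∀ ω k,
      ν (PiNat.cylinder ω k) = ENNReal.ofReal (wordRatio p (res ω k)) := by
  have hsum' : ∑ j, ENNReal.ofReal (p j) = 1 := by
    rw [← ENNReal.ofReal_sum_of_nonneg fun j _ => hp j, hsum, ENNReal.ofReal_one]
  set P := PMF.ofFintype (fun j => ENNReal.ofReal (p j)) hsum'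
  refine ⟨Measure.infinitePi fun _ => P.toMeasure, fun ω k => ?_⟩
  rw [cylinder_eq_pi, Measure.infinitePi_pi _ fun i _ => measurableSet_singleton _, wordRatio_res,
    ENNReal.ofReal_prod_of_nonneg fun i _ => hp _]
  refine Finset.prod_congr rfl fun i _ => ?_
  rw [PMF.toMeasure_apply_singleton _ _ (measurableSet_singleton _), PMF.ofFintype_apply]

namespace IsSelfSimilar

variable {X : Type*} [MetricSpace X] {g : ι → X → X} {r : ι → ℝ} {F : Set X}

theorem exists_forall_ratio_le [Finite ι] (h : IsSelfSimilar g r F) :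
    ∃ c ∈ Ioo (0 : ℝ) 1, ∀ j, r j ≤ c := by
  have := h.nonempty_index
  obtain ⟨i, hi⟩ := Finite.exists_max r
  exact ⟨r i, h.ratio_mem i, hi⟩

theorem exists_forall_le_ratio [Finite ι] (h : IsSelfSimilar g r F) :
    ∃ c ∈ Ioo (0 : ℝ) 1, ∀ j, c ≤ r j := by
  have := h.nonempty_index
  obtain ⟨i, hi⟩ := Finite.exists_min r
  exact ⟨r i, h.ratio_mem i, hi⟩

theorem exists_le_wordRatio_res_lt [Finite ι] (h : IsSelfSimilar g r F) {c : ℝ}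
    (hc : ∀ j, c ≤ r j) {x : ℝ} (hx : x ∈ Ioc (0 : ℝ) 1) (ω : ℕ → ι) :
    ∃ k, x ≤ wordRatio r (res ω k) ∧ c * wordRatio r (res ω k) < x := by
  classical
  obtain ⟨c', hc', hle⟩ := h.exists_forall_ratio_le
  have hsmall : ∃ k, wordRatio r (res ω k) < x := by
    obtain ⟨k, hk⟩ := exists_pow_lt_of_lt_one hx.1 hc'.2
    refine ⟨k, (wordRatio_le_pow_length h.ratio_pos hle _).trans_lt ?_⟩
    rwa [res_length]
  obtain ⟨k, hk⟩ : ∃ k, Nat.find hsmall = k + 1 :=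
    Nat.exists_eq_add_one.2 ((Nat.find_pos hsmall).2 (by simpa using hx.2))
  refine ⟨k, not_lt.1 (Nat.find_min hsmall (by omega)), ?_⟩
  refine lt_of_le_of_lt ?_ (hk ▸ Nat.find_spec hsmall)
  rw [res_succ, wordRatio_cons]
  exact mul_le_mul_of_nonneg_right (hc _) (h.wordRatio_pos _).le

theorem exists_continuous_forall_mem_piece [Finite ι] [TopologicalSpace ι] [DiscreteTopology ι]
    (h : IsSelfSimilar g r F) :
    ∃ π : (ℕ → ι) → X, Continuous π ∧ ∀ ω k, π ω ∈ piece g F (res ω k) := by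
  have vanishing : CantorScheme.VanishingDiam (piece g F) := by
    intro ω
    obtain ⟨c, hc, hle⟩ := h.exists_forall_ratio_le
    have hlim : Tendsto (fun k => ENNReal.ofReal (c ^ k * Metric.diam F)) atTop (𝓝 0) := by
      simpa using ENNReal.tendsto_ofReal
        ((tendsto_pow_atTop_nhds_zero_of_lt_one hc.1.le hc.2).mul_const (Metric.diam F))
    refine tendsto_of_tendsto_of_tendsto_of_le_of_le tendsto_const_nhds hlim (fun _ => zero_le)
      fun k => Metric.ediam_le fun x hx y hy => ?_
    rw [edist_dist]
    refine ENNReal.ofReal_le_ofReal ((h.dist_le_of_mem_piece hx hy).trans ?_)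
    refine mul_le_mul_of_nonneg_right ?_ Metric.diam_nonneg
    simpa using wordRatio_le_pow_length h.ratio_pos hle (res ω k)
  have hdom : ∀ ω, ω ∈ (CantorScheme.inducedMap (piece g F)).1 := fun ω =>
    IsCompact.nonempty_iInter_of_sequence_nonempty_isCompact_isClosed _
      (fun k => h.piece_cons_subset (ω k) (res ω k)) (fun _ => h.nonempty_piece _)
      (h.isCompact_piece _) fun _ => (h.isCompact_piece _).isClosed
  exact ⟨fun ω => (CantorScheme.inducedMap (piece g F)).2 ⟨ω, hdom ω⟩,
    vanishing.map_continuous.comp (by fun_prop),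
    fun ω k => CantorScheme.map_mem (⟨ω, hdom ω⟩ : (CantorScheme.inducedMap (piece g F)).1) k⟩

theorem res_eq_of_mem_piece (h : IsSelfSimilar g r F)
    (hdisj : Pairwise fun i j => Disjoint (g i '' F) (g j '' F)) {π : (ℕ → ι) → X}
    (hπ : ∀ ω k, π ω ∈ piece g F (res ω k)) {ω ω' : ℕ → ι} {k : ℕ}
    (hmem : π ω' ∈ piece g F (res ω k)) : res ω' k = res ω k := by
  induction k with
  | zero => rfl
  | succ k ih =>
    have hres := ih (h.piece_cons_subset _ _ hmem)
    have hmem' := hπ ω' (k + 1)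
    rw [res_succ, hres] at hmem'
    have heq : ω' k = ω k := by
      by_contra hne
      exact disjoint_left.1 (h.disjoint_piece_cons hdisj _ hne) hmem' hmem
    rw [res_succ, res_succ, hres, heq]

theorem measure_preimage_le [Finite ι] [MeasurableSpace ι] (h : IsSelfSimilar g r F)
    (hdisj : Pairwise fun i j => Disjoint (g i '' F) (g j '' F)) {π : (ℕ → ι) → X}
    (hπ : ∀ ω k, π ω ∈ piece g F (res ω k)) {ν : Measure (ℕ → ι)} {s : ℝ} (hs : 0 < s)
    (hν : ∀ ω k, ν (PiNat.cylinder ω k) = ENNReal.ofReal (wordRatio (r · ^ s) (res ω k)))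
    {c : ℝ} (hc0 : 0 < c) (hc : ∀ j, c ≤ r j) {δ : ℝ} (hδ0 : 0 < δ)
    (hδ : ∀ w, ∀ x ∈ piece g F w, ∀ y ∈ F \ piece g F w, δ * wordRatio r w ≤ dist x y)
    {U : Set X} {a : ℝ≥0} (hU : Metric.ediam U < a) (ha : a ≤ δ) :
    ν (π ⁻¹' U) ≤ ENNReal.ofReal ((δ * c)⁻¹ ^ s) * (a : ℝ≥0∞) ^ s := by
  rcases (π ⁻¹' U).eq_empty_or_nonempty with hempty | ⟨ω, hω⟩
  · simp [hempty]
  have ha0 : (0 : ℝ) < a := NNReal.coe_pos.2 (ENNReal.coe_pos.1 (pos_of_gt hU))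
  obtain ⟨k, hk, hk'⟩ := h.exists_le_wordRatio_res_lt hc (x := a / δ)
    ⟨div_pos ha0 hδ0, (div_le_one hδ0).2 ha⟩ ω
  have preimage_subset : π ⁻¹' U ⊆ PiNat.cylinder ω k := by
    intro ω' hω'
    rw [cylinder_eq_res]
    refine h.res_eq_of_mem_piece hdisj hπ (by_contra fun hnot => ?_)
    have hfar := hδ _ _ (hπ ω k) _ ⟨h.piece_subset _ (hπ ω' 0), hnot⟩
    have hnear := (Metric.edist_le_ediam_of_mem (s := U) hω hω').trans_lt hU
    rw [edist_lt_coe, ← NNReal.coe_lt_coe, coe_nndist] at hnear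
    exact (hnear.trans_le ((div_le_iff₀' hδ0).1 hk)).not_ge hfar
  refine (measure_mono preimage_subset).trans ?_
  rw [hν, wordRatio_rpow h.ratio_pos, ← ENNReal.ofReal_coe_nnreal,
    ENNReal.ofReal_rpow_of_nonneg a.coe_nonneg hs.le, ← ENNReal.ofReal_mul (by positivity),
    ← Real.mul_rpow (by positivity) a.coe_nonneg, inv_mul_eq_div, ← div_div]
  exact ENNReal.ofReal_le_ofReal (Real.rpow_le_rpow (h.wordRatio_pos _).le
    ((lt_div_iff₀' hc0).2 hk').le hs.le)

variable [MeasurableSpace X] [BorelSpace X] {s : ℝ}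

theorem hausdorffMeasure_pos [Fintype ι] (h : IsSelfSimilar g r F)
    (hdisj : Pairwise fun i j => Disjoint (g i '' F) (g j '' F)) (hs : 0 < s)
    (hsum : ∑ j, r j ^ s = 1) : 0 < μH[s] F := by
  let _ : TopologicalSpace ι := ⊥
  have : DiscreteTopology ι := ⟨rfl⟩
  borelize ι
  obtain ⟨ν, hν⟩ := exists_measure_cylinder_eq_wordRatio
    (fun j => Real.rpow_nonneg (h.ratio_pos j).le s) hsum
  obtain ⟨π, hπc, hπ⟩ := h.exists_continuous_forall_mem_piece
  obtain ⟨c, hc, hcr⟩ := h.exists_forall_le_ratio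
  obtain ⟨δ, hδ0, hδ⟩ := h.exists_forall_mul_wordRatio_le_dist hdisj
  have hle := measure_le_mul_hausdorffMeasure (μ := ν.map π) (s := s)
    (Real.toNNReal_pos.2 (Real.rpow_pos_of_pos (inv_pos.2 (mul_pos hδ0 hc.1)) s)).ne'
    (Real.toNNReal_pos.2 hδ0) (fun U hU a hUa ha => by
      rw [Measure.map_apply hπc.measurable hU.measurableSet]
      exact h.measure_preimage_le hdisj hπ hs hν hc.1 hcr hδ0 hδ hUa
        ((Real.le_toNNReal_iff_coe_le hδ0.le).1 ha)) F
  have hmass : ν.map π F = 1 := by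
    obtain ⟨j⟩ := h.nonempty_index
    have hπF : π ⁻¹' F = univ := eq_univ_of_forall fun ω => h.piece_subset [] (hπ ω 0)
    rw [Measure.map_apply hπc.measurable h.isCompact.measurableSet, hπF,
      ← cylinder_zero fun _ => j, hν]
    simp
  rw [hmass] at hle
  exact pos_of_ne_zero fun h0 => by simp [h0] at hle

theorem hausdorffMeasure_piece_le (h : IsSelfSimilar g r F) (hs : 0 ≤ s) (w : List ι) :
    μH[s] (piece g F w) ≤ ENNReal.ofReal (wordRatio r w ^ s) * μH[s] F := by
  rw [← ENNReal.ofReal_rpow_of_pos (h.wordRatio_pos w)]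
  exact (h.lipschitzWith_wordMap w).lipschitzOnWith.hausdorffMeasure_image_le hs

theorem hausdorffMeasure_lt_top [Fintype ι] (h : IsSelfSimilar g r F) (hs : 0 < s)
    (hsum : ∑ j, r j ^ s = 1) : μH[s] F < ⊤ := by
  obtain ⟨c, hc, hle⟩ := h.exists_forall_ratio_le
  have ediam_le : ∀ w, Metric.ediam (piece g F w) ≤
      ENNReal.ofReal (wordRatio r w * Metric.diam F) := fun w =>
    Metric.ediam_le fun x hx y hy => by
      rw [edist_dist]
      exact ENNReal.ofReal_le_ofReal (h.dist_le_of_mem_piece hx hy)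
  have sum_le : ∀ k : ℕ, ∑ v : Fin k → ι, Metric.ediam (piece g F (List.ofFn v)) ^ s ≤
      ENNReal.ofReal (Metric.diam F ^ s) := by
    intro k
    calc ∑ v : Fin k → ι, Metric.ediam (piece g F (List.ofFn v)) ^ s
        ≤ ∑ v : Fin k → ι, ENNReal.ofReal ((∏ i, r (v i) ^ s) * Metric.diam F ^ s) := by
          refine Finset.sum_le_sum fun v _ => (ENNReal.rpow_le_rpow (ediam_le _) hs.le).trans_eq ?_
          rw [ENNReal.ofReal_rpow_of_nonneg (mul_nonneg (h.wordRatio_pos _).le Metric.diam_nonneg)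
            hs.le, Real.mul_rpow (h.wordRatio_pos _).le Metric.diam_nonneg,
            Real.finsetProd_rpow _ _ fun i _ => (h.ratio_pos _).le]
          simp [wordRatio, List.map_ofFn, List.prod_ofFn]
      _ = ENNReal.ofReal ((∑ j, r j ^ s) ^ k * Metric.diam F ^ s) := by
          rw [← ENNReal.ofReal_sum_of_nonneg fun v _ => mul_nonneg
            (Finset.prod_nonneg fun i _ => Real.rpow_nonneg (h.ratio_pos _).le _)
            (Real.rpow_nonneg Metric.diam_nonneg _), ← Finset.sum_mul, Fintype.sum_pow]
      _ = ENNReal.ofReal (Metric.diam F ^ s) := by rw [hsum, one_pow, one_mul]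
  have mesh_tendsto : Tendsto (fun k => ENNReal.ofReal (c ^ k * Metric.diam F)) atTop (𝓝 0) := by
    simpa using ENNReal.tendsto_ofReal
      ((tendsto_pow_atTop_nhds_zero_of_lt_one hc.1.le hc.2).mul_const (Metric.diam F))
  refine (Measure.hausdorffMeasure_le_liminf_sum s F _ mesh_tendsto
    (fun k (v : Fin k → ι) => piece g F (List.ofFn v))
    (Eventually.of_forall fun k v => (ediam_le _).trans ?_)
    (Eventually.of_forall fun k x hx => ?_)).trans_lt
    ((liminf_le_of_frequently_le' (Frequently.of_forall sum_le)).trans_lt ENNReal.ofReal_lt_top)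
  · refine ENNReal.ofReal_le_ofReal (mul_le_mul_of_nonneg_right ?_ Metric.diam_nonneg)
    simpa using wordRatio_le_pow_length h.ratio_pos hle (List.ofFn v)
  · obtain ⟨w, rfl, hxw⟩ := h.exists_mem_piece hx k
    exact mem_iUnion.2 ⟨w.get, by rwa [List.ofFn_get]⟩

end IsSelfSimilar

end SimilarityDimension

section FiniteType

variable {κ : Type*} {lam : ℝ} {b : κ → ℝ}

/-- The homotheties of `ℝ` with common ratio `lam` and translation parts `b`. -/
def homothetyFamily (lam : ℝ) (b : κ → ℝ) (i : κ) (x : ℝ) : ℝ := lam * x + b i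

/-- `IsRelTranslation lam b d` means that `d` is the distance, up to sign and in units of
`lam ^ l`, between the positions of two pieces of the same level `l` of the attractor of
`homothetyFamily lam b`. -/
inductive IsRelTranslation (lam : ℝ) (b : κ → ℝ) : ℝ → Prop
  | zero : IsRelTranslation lam b 0
  | step {d : ℝ} (hd : IsRelTranslation lam b d) (i j : κ) :
      IsRelTranslation lam b ((d + (b i - b j)) / lam)

/-- The finite type condition for `homothetyFamily lam b`: pieces of equal level within a bounded
multiple of their size of each other have only finitely many relative positions. -/
def IsFiniteType (lam : ℝ) (b : κ → ℝ) : Prop :=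
  ∀ K, {d | IsRelTranslation lam b d ∧ |d| ≤ K}.Finite

theorem wordMap_homothetyFamily (w : List κ) (x : ℝ) :
    wordMap (homothetyFamily lam b) w x =
      lam ^ w.length * x + wordMap (homothetyFamily lam b) w 0 := by
  induction w generalizing x with
  | nil => simp [wordMap]
  | cons i w ih =>
    simp only [wordMap, Function.comp_apply, List.length_cons]
    rw [ih, ih (homothetyFamily lam b i 0)]
    simp only [homothetyFamily]
    ring

theorem isRelTranslation_wordMap_sub (h0 : lam ≠ 0) {w w' : List κ} (h : w.length = w'.length) :
    IsRelTranslation lam b ((wordMap (homothetyFamily lam b) w 0 -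
      wordMap (homothetyFamily lam b) w' 0) / lam ^ w.length) := by
  induction w generalizing w' with
  | nil =>
    rw [List.eq_nil_of_length_eq_zero h.symm, sub_self, zero_div]
    exact .zero
  | cons i w ih =>
    obtain ⟨j, w', rfl⟩ := List.exists_cons_of_length_eq_add_one h.symm
    have hlen : w.length = w'.length := by simpa using h
    convert (ih hlen).step i j using 1
    simp only [wordMap, Function.comp_apply]
    rw [wordMap_homothetyFamily, wordMap_homothetyFamily w', List.length_cons, ← hlen]
    simp only [homothetyFamily]
    field_simp
    ring

theorem abs_le_of_abs_step_le (h0 : 0 < lam) (hb : ∀ i j, |b i - b j| ≤ 1 - lam) {d K : ℝ}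
    {i j : κ} (h : |(d + (b i - b j)) / lam| ≤ K) : |d| ≤ lam * K + (1 - lam) := by
  rw [abs_div, abs_of_pos h0, div_le_iff₀' h0] at h
  calc |d| = |(d + (b i - b j)) - (b i - b j)| := by rw [add_sub_cancel_right]
    _ ≤ |d + (b i - b j)| + |b i - b j| := abs_sub _ _
    _ ≤ lam * K + (1 - lam) := add_le_add h (hb i j)

theorem finite_step_image [Finite κ] {S : Set ℝ} (hS : S.Finite) :
    ((fun z : ℝ × κ × κ => (z.1 + (b z.2.1 - b z.2.2)) / lam) '' (S ×ˢ univ)).Finite :=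
  (hS.prod finite_univ).image _

-- Parents of relative translations of size `K` have size at most `lam * K + (1 - lam)`, which is
-- closer to `1` than `K`; so finitely many steps lead from any `K` down to the core `T`.
theorem isFiniteType_of_core [Finite κ] (hlam : lam ∈ Ioo (0 : ℝ) 1)
    (hb : ∀ i j, |b i - b j| ≤ 1 - lam) {T : Set ℝ} (hT : T.Finite) (hT0 : 0 ∈ T)
    (hstep : ∀ d ∈ T, ∀ i j, |(d + (b i - b j)) / lam| ≤ 1 → (d + (b i - b j)) / lam ∈ T) :
    IsFiniteType lam b := by
  obtain ⟨R, hR, hgap⟩ := exists_gt_forall_lt_imp_le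
    ((finite_step_image (lam := lam) (b := b) hT).image abs) 1
  have mem_core : ∀ d, IsRelTranslation lam b d → |d| < R → d ∈ T := by
    intro d hd
    induction hd with
    | zero => exact fun _ => hT0
    | @step d _ i j ih =>
      intro hlt
      have hparent := abs_le_of_abs_step_le hlam.1 hb hlt.le
      have hdT : d ∈ T := ih (by nlinarith [hlam.2])
      exact hstep d hdT i j (hgap _ ⟨_, ⟨(d, i, j), ⟨hdT, trivial⟩, rfl⟩, rfl⟩ hlt)
  have finite_of_pow_mul_lt : ∀ (k : ℕ) (K : ℝ), lam ^ k * (K - 1) < R - 1 →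
      {d | IsRelTranslation lam b d ∧ |d| ≤ K}.Finite := by
    intro k
    induction k with
    | zero =>
      intro K hK
      exact hT.subset fun d hd => mem_core d hd.1 (hd.2.trans_lt (by simpa using hK))
    | succ k ih =>
      intro K hK
      have hprev := ih (lam * K + (1 - lam)) (by rw [pow_succ] at hK; linarith)
      refine ((finite_step_image (lam := lam) (b := b) hprev).insert 0).subset ?_
      rintro _ ⟨_ | ⟨hd, i, j⟩, hle⟩
      · exact mem_insert _ _
      · exact mem_insert_of_mem _
          ⟨(_, i, j), ⟨⟨hd, abs_le_of_abs_step_le hlam.1 hb hle⟩, trivial⟩, rfl⟩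
  intro K
  have hlim : Tendsto (fun k : ℕ => lam ^ k * (K - 1)) atTop (𝓝 0) := by
    simpa using (tendsto_pow_atTop_nhds_zero_of_lt_one hlam.1.le hlam.2).mul_const (K - 1)
  obtain ⟨k, hk⟩ := (hlim.eventually_lt_const (sub_pos.2 hR)).exists
  exact finite_of_pow_mul_lt k K hk

theorem exists_eq_image_iUnion_translates {E : Set ℝ}
    (hE : IsSelfSimilar (homothetyFamily lam b) (fun _ => lam) E) {A : Set ℝ} (hAE : A ⊆ E)
    (hA : A.Nonempty) {l : ℕ} (hsep : ∀ x ∈ A, ∀ y ∈ E \ A, lam ^ l * Metric.diam E < dist x y)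
    {K : ℝ} (hdiam : Metric.diam A ≤ K * lam ^ l) :
    ∃ p, ∃ S ⊆ {d | IsRelTranslation lam b d ∧ |d| ≤ K},
      A = (fun x => lam ^ l * x + p) '' ⋃ d ∈ S, (· + d) '' E := by
  have h0 : 0 < lam := hE.ratio_mem_of_const.1
  have hl : 0 < lam ^ l := pow_pos h0 l
  have piece_subset : ∀ w, w.length = l → ∀ x ∈ A, x ∈ piece (homothetyFamily lam b) E w →
      piece (homothetyFamily lam b) E w ⊆ A := fun w hw x hxA hxw =>
    hE.piece_subset_of_lt_dist (by rwa [wordRatio_const, hw]) hxA hxw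
  obtain ⟨x₀, hx₀⟩ := hA
  obtain ⟨w₀, hw₀, hxw₀⟩ := hE.exists_mem_piece (hAE hx₀) l
  set o := fun w => wordMap (homothetyFamily lam b) w 0
  refine ⟨o w₀, (fun w => (o w - o w₀) / lam ^ l) ''
    {w | w.length = l ∧ piece (homothetyFamily lam b) E w ⊆ A}, ?_, ?_⟩
  · rintro _ ⟨w, ⟨hw, hwA⟩, rfl⟩
    refine ⟨hw ▸ isRelTranslation_wordMap_sub h0.ne' (hw.trans hw₀.symm), ?_⟩
    obtain ⟨e, he⟩ := hE.nonempty
    have hle := (Metric.dist_le_diam_of_mem (hE.isCompact.isBounded.subset hAE)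
      (hwA (mem_image_of_mem _ he))
      (piece_subset w₀ hw₀ x₀ hx₀ hxw₀ (mem_image_of_mem _ he))).trans hdiam
    rw [wordMap_homothetyFamily, wordMap_homothetyFamily w₀, hw, hw₀, Real.dist_eq,
      add_sub_add_left_eq_sub] at hle
    rwa [abs_div, abs_of_pos hl, div_le_iff₀ hl]
  · have piece_eq : ∀ w, w.length = l → piece (homothetyFamily lam b) E w =
        (fun x => lam ^ l * x + o w₀) '' ((· + (o w - o w₀) / lam ^ l) '' E) := by
      intro w hw
      rw [piece, image_image]
      refine image_congr fun x _ => ?_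
      rw [wordMap_homothetyFamily, hw]
      field_simp
      ring
    rw [biUnion_image, image_iUnion₂]
    refine Subset.antisymm (fun x hx => ?_) (iUnion₂_subset fun w hw => piece_eq w hw.1 ▸ hw.2)
    obtain ⟨w, hw, hxw⟩ := hE.exists_mem_piece (hAE hx) l
    exact mem_biUnion (x := w) ⟨hw, piece_subset w hw x hx hxw⟩ (piece_eq w hw ▸ hxw)

open scoped Pointwise in
theorem hausdorffMeasure_real_image_mul_add {s : ℝ} (hs : 0 ≤ s) {c : ℝ} (hc : 0 < c) (p : ℝ)
    (A : Set ℝ) : (μH[s]).real ((fun x => c * x + p) '' A) = c ^ s * (μH[s]).real A := by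
  have himage : (fun x => c * x + p) '' A = IsometryEquiv.addRight p '' (c • A) := by
    rw [← image_smul, image_image]
    rfl
  rw [himage, Measure.real, IsometryEquiv.hausdorffMeasure_image,
    Measure.hausdorffMeasure_smul₀ hs hc.ne', ENNReal.smul_def, smul_eq_mul, ENNReal.toReal_mul,
    ENNReal.coe_toReal, NNReal.coe_rpow, coe_nnnorm, Real.norm_of_nonneg hc.le, Measure.real]

theorem IsFiniteType.exists_finite_hausdorffMeasure_values (h : IsFiniteType lam b) {E : Set ℝ}
    (hE : IsSelfSimilar (homothetyFamily lam b) (fun _ => lam) E) {s : ℝ} (hs : 0 ≤ s) (K : ℝ) :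
    ∃ V : Set ℝ, V.Finite ∧ ∀ (l : ℕ) (A : Set ℝ), A ⊆ E → A.Nonempty →
      (∀ x ∈ A, ∀ y ∈ E \ A, lam ^ l * Metric.diam E < dist x y) →
      Metric.diam A ≤ K * lam ^ l → ∃ a ∈ V, (μH[s]).real A = (lam ^ s) ^ l * a := by
  refine ⟨(fun S => (μH[s]).real (⋃ d ∈ S, (· + d) '' E)) ''
    {S | S ⊆ {d | IsRelTranslation lam b d ∧ |d| ≤ K}}, (h K).finite_subsets.image _, ?_⟩
  intro l A hAE hA hsep hdiam
  have h0 : 0 < lam := hE.ratio_mem_of_const.1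
  obtain ⟨p, S, hS, rfl⟩ := exists_eq_image_iUnion_translates hE hAE hA hsep hdiam
  refine ⟨_, ⟨S, hS, rfl⟩, ?_⟩
  rw [hausdorffMeasure_real_image_mul_add hs (pow_pos h0 l), Real.rpow_pow_comm h0.le]

end FiniteType

section ExactOverlaps

variable {lam : ℝ}

/-- The distances that occur between the left endpoints of two first-level intervals of a set in
the class `𝒜`: the intervals coincide, overlap in a proportion `lam` of their length, or do not
overlap. -/
def IsGap (lam u : ℝ) : Prop := u = 0 ∨ u = lam * (1 - lam) ∨ lam ≤ u

theorem IsGap.nonneg (hlam : lam ∈ Ioo (0 : ℝ) 1) {u : ℝ} (h : IsGap lam u) : 0 ≤ u := by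
  obtain ⟨h0, h1⟩ := hlam
  rcases h with rfl | rfl | h
  · exact le_rfl
  · exact mul_nonneg h0.le (sub_nonneg.2 h1.le)
  · exact h0.le.trans h

theorem IsGap.add (h0 : 0 < lam) (h2 : lam ≤ 1 / 2) {u v : ℝ} (hu : IsGap lam u)
    (hv : IsGap lam v) : IsGap lam (u + v) := by
  rcases hu with rfl | rfl | hu <;> rcases hv with rfl | rfl | hv <;> unfold IsGap
  · simp
  · simp
  · simp [hv]
  · simp
  all_goals exact .inr (.inr (by nlinarith))

theorem isGap_abs_add_sub {κ : Type*} {b : κ → ℝ} (h0 : 0 < lam) (h2 : lam ≤ 1 / 2)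
    (hleft : ∀ i, IsGap lam (b i)) (hright : ∀ i, IsGap lam (1 - lam - b i))
    (hb : ∀ i j, IsGap lam |b i - b j|) {d : ℝ} (hd : |d| ∈ ({0, 1 - lam, 1} : Set ℝ))
    (i j : κ) : IsGap lam |d + (b i - b j)| := by
  have hlam : lam ∈ Ioo (0 : ℝ) 1 := ⟨h0, by linarith⟩
  wlog hd0 : 0 ≤ d generalizing d i j
  · convert this (d := -d) (by rwa [abs_neg]) j i (by linarith) using 1
    rw [← abs_neg]
    ring_nf
  have hsum := (hleft i).add h0 h2 (hright j)
  rcases abs_of_nonneg hd0 ▸ hd with rfl | rfl | rfl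
  · simpa using hb i j
  · convert hsum using 1
    rw [← abs_of_nonneg (hsum.nonneg hlam)]
    ring_nf
  · have hsum' := hsum.add h0 h2 (.inr (.inr le_rfl))
    convert hsum' using 1
    rw [← abs_of_nonneg (hsum'.nonneg hlam)]
    ring_nf

theorem isFiniteType_of_isGap {κ : Type*} [Finite κ] {b : κ → ℝ} (h0 : 0 < lam)
    (h2 : lam ≤ 1 / 2) (hleft : ∀ i, IsGap lam (b i)) (hright : ∀ i, IsGap lam (1 - lam - b i))
    (hb : ∀ i j, IsGap lam |b i - b j|) : IsFiniteType lam b := by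
  have hlam : lam ∈ Ioo (0 : ℝ) 1 := ⟨h0, by linarith⟩
  refine isFiniteType_of_core (T := {d | |d| ∈ ({0, 1 - lam, 1} : Set ℝ)}) hlam ?_
    ?_ (by simp) ?_
  · intro i j
    have := (hleft i).nonneg hlam
    have := (hleft j).nonneg hlam
    have := (hright i).nonneg hlam
    have := (hright j).nonneg hlam
    exact abs_le.2 ⟨by linarith, by linarith⟩
  · have hfin : ({0, 1 - lam, 1} : Set ℝ).Finite := toFinite _
    refine (hfin.union (hfin.image Neg.neg)).subset fun d hd => (abs_choice d).imp ?_ ?_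
    · exact fun h => h ▸ hd
    · exact fun h => ⟨|d|, hd, by rw [h, neg_neg]⟩
  · intro d hdT i j hle
    rw [mem_ofPred_eq, abs_div, abs_of_pos h0]
    rw [abs_div, abs_of_pos h0, div_le_one h0] at hle
    rcases isGap_abs_add_sub h0 h2 hleft hright hb hdT i j with h | h | h
    · simp [h]
    · simp [h, h0.ne']
    · simp [le_antisymm hle h, h0.ne']

theorem volume_Icc_add_inter_Icc_add {a a' : ℝ} (h : a ≤ a') (c : ℝ) :
    volume (Icc a (a + c) ∩ Icc a' (a' + c)) = ENNReal.ofReal (a + c - a') := by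
  rw [Icc_inter_Icc, sup_eq_right.2 h, inf_eq_left.2 (add_le_add_left h c), Real.volume_Icc]

theorem le_or_eq_of_volume_inter {a a' : ℝ} (h0 : 0 < lam) (h : a ≤ a')
    (hvol : (Icc a (a + lam) ∩ Icc a' (a' + lam)).Nonempty →
      volume (Icc a (a + lam) ∩ Icc a' (a' + lam)) = 0 ∨
        volume (Icc a (a + lam) ∩ Icc a' (a' + lam)) = ENNReal.ofReal (lam * lam)) :
    lam ≤ a' - a ∨ a' - a = lam * (1 - lam) ∧
      volume (Icc a (a + lam) ∩ Icc a' (a' + lam)) = ENNReal.ofReal (lam * lam) := by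
  rcases le_or_gt (a + lam) a' with hle | hlt
  · exact .inl (by linarith)
  have hne : (Icc a (a + lam) ∩ Icc a' (a' + lam)).Nonempty :=
    ⟨a', ⟨h, hlt.le⟩, le_rfl, by linarith⟩
  refine (hvol hne).imp (fun h => ?_) fun hv => ⟨?_, hv⟩
  · rw [volume_Icc_add_inter_Icc_add ‹_›, ENNReal.ofReal_eq_zero] at h
    linarith
  · rw [volume_Icc_add_inter_Icc_add h, ENNReal.ofReal_eq_ofReal_iff (by linarith)
      (mul_self_nonneg lam)] at hv
    linarith

theorem isGap_sub_of_isGap_succ {b : ℕ → ℝ} {n : ℕ} (h0 : 0 < lam) (h2 : lam ≤ 1 / 2)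
    (h : ∀ i, i + 1 < n → IsGap lam (b (i + 1) - b i)) {i j : ℕ} (hij : i ≤ j) (hj : j < n) :
    IsGap lam (b j - b i) := by
  induction j, hij using Nat.le_induction with
  | base => exact .inl (sub_self _)
  | succ j _ ih => simpa using (h j hj).add h0 h2 (ih (by omega))

theorem sub_succ_le_sub_zero {b : ℕ → ℝ} {n : ℕ} (h : ∀ i, i + 1 < n → b i ≤ b (i + 1)) {i : ℕ}
    (hi : i + 1 < n) : b (i + 1) - b i ≤ b (n - 1) - b 0 := by
  have hb : MonotoneOn b (Iio n) :=
    monotoneOn_of_le_add_one ordConnected_Iio fun i _ _ hi => h i hi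
  have hleft := hb (mem_Iio.2 (by omega)) (mem_Iio.2 (Nat.lt_of_succ_lt hi)) (Nat.zero_le i)
  have hright := hb (mem_Iio.2 hi) (mem_Iio.2 (by omega : n - 1 < n)) (by omega)
  linarith

theorem IsInClassA.exists_isSelfSimilar_isFiniteType {n m : ℕ} {E : Set ℝ}
    (hE : IsInClassA lam n m E) : ∃ b : Fin n → ℝ,
      IsSelfSimilar (homothetyFamily lam b) (fun _ => lam) E ∧ IsFiniteType lam b := by
  obtain ⟨hlam, -, hmn, b, hb0, hb1, hmono, hvol, hcard, hne, hcpt, hE⟩ := hE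
  have hgap i (hi : i + 1 < n) := le_or_eq_of_volume_inter hlam.1 (hmono i hi).le (hvol i hi)
  have lam_le_half : lam ≤ 1 / 2 := by
    obtain ⟨i, hi, hvol'⟩ : ∃ i ∈ Iio (n - 1), i ∉ {i : ℕ | i + 1 < n ∧
        volume (Icc (b i) (b i + lam) ∩ Icc (b (i + 1)) (b (i + 1) + lam)) =
          ENNReal.ofReal (lam * lam)} := by
      refine exists_mem_notMem_of_ncard_lt_ncard ?_ ((finite_Iio n).subset ?_)
      · rw [hcard, ncard_Iio_nat]
        omega
      · exact fun i hi => mem_Iio.2 (Nat.lt_of_succ_lt hi.1)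
    have hin : i + 1 < n := by rw [mem_Iio] at hi; omega
    have hlam_le := (hgap i hin).resolve_right fun h => hvol' ⟨hin, h.2⟩
    have := sub_succ_le_sub_zero (fun i hi => (hmono i hi).le) hin
    linarith
  have isGap_sub : ∀ {i j}, i ≤ j → j < n → IsGap lam (b j - b i) := fun hij hj =>
    isGap_sub_of_isGap_succ hlam.1 lam_le_half
      (fun i hi => (hgap i hi).elim (fun h => .inr (.inr h)) fun h => .inr (.inl h.1)) hij hj
  refine ⟨fun i => b i, ⟨fun _ => hlam, fun i x y => ?_, hne, hcpt, ?_⟩, ?_⟩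
  · rw [homothetyFamily, homothetyFamily, dist_add_right, Real.dist_eq, Real.dist_eq, ← mul_sub,
      abs_mul, abs_of_pos hlam.1]
  · refine hE.trans (ext fun x => ?_)
    simp [Fin.exists_iff, homothetyFamily]
  · refine isFiniteType_of_isGap hlam.1 lam_le_half ?_ ?_ ?_
    · exact fun i => by simpa [hb0] using isGap_sub (Nat.zero_le i) i.2
    · exact fun i => by simpa [hb1] using isGap_sub (Nat.le_sub_one_of_lt i.2) (by omega)
    · intro i j
      rcases le_total i j with hij | hij
      · have := isGap_sub hij j.2
        rwa [abs_sub_comm, abs_of_nonneg (this.nonneg hlam)]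
      · have := isGap_sub hij i.2
        rwa [abs_of_nonneg (this.nonneg hlam)]

end ExactOverlaps

section BiLipschitzImages

theorem LipEquiv.exists_lipschitzOnWith_antilipschitzWith {X Y : Type*} [MetricSpace X]
    [MetricSpace Y] [Nonempty X] {A : Set X} {B : Set Y} (h : LipEquiv A B) :
    ∃ (φ : Y → X) (C : ℝ≥0), LipschitzOnWith C φ B ∧ AntilipschitzWith C (B.domRestrict φ) ∧
      φ '' B = A := by
  obtain ⟨f, hf, C, hC, hd⟩ := h
  obtain ⟨e, rfl⟩ : ∃ e : A ≃ B, e = f := ⟨Equiv.ofBijective f hf, rfl⟩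
  have hd' (x y : B) : dist (e.symm x) (e.symm y) ≤ C * dist x y ∧
      dist x y ≤ C * dist (e.symm x) (e.symm y) := by
    simpa [inv_mul_le_iff₀ hC] using hd (e.symm x) (e.symm y)
  let φ : Y → X :=
    Function.extend Subtype.val (fun y => (e.symm y : X)) fun _ => Classical.arbitrary X
  have hφ (y : B) : φ y = e.symm y := Subtype.val_injective.extend_apply _ _ y
  refine ⟨φ, ⟨C, hC.le⟩, .of_dist_le_mul fun x hx y hy => ?_, .of_le_mul_dist fun x y => ?_, ?_⟩
  · rw [hφ ⟨x, hx⟩, hφ ⟨y, hy⟩]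
    exact (hd' ⟨x, hx⟩ ⟨y, hy⟩).1
  · rw [domRestrict_apply, domRestrict_apply, hφ, hφ]
    exact (hd' x y).2
  · rw [image_eq_range]
    simp only [hφ]
    rw [range_comp', e.symm.surjective.range_eq, image_univ, Subtype.range_coe]

theorem hausdorffMeasure_real_image_pos {X Y : Type*} [MetricSpace X] [MetricSpace Y]
    [MeasurableSpace X] [BorelSpace X] [MeasurableSpace Y] [BorelSpace Y] {F : Set X} {φ : X → Y}
    {C : ℝ≥0} {s : ℝ} (hφ : AntilipschitzWith C (F.domRestrict φ)) (hs : 0 ≤ s) (hpos : 0 < μH[s] F)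
    (htop : μH[s] (φ '' F) ≠ ⊤) : 0 < (μH[s]).real (φ '' F) := by
  refine ENNReal.toReal_pos (fun h0 => hpos.ne' ?_) htop
  have hle := hφ.le_hausdorffMeasure_image hs univ
  rwa [image_univ, range_domRestrict, h0, mul_zero, nonpos_iff_eq_zero,
    ← (isometry_subtype_coe (s := F)).hausdorffMeasure_image (.inl hs), image_univ,
    Subtype.range_coe] at hle

namespace IsSelfSimilar

variable {ι X Y : Type*} [MetricSpace X] [MetricSpace Y] {g : ι → X → X} {r : ι → ℝ} {F : Set X}
  {φ : X → Y} {C : ℝ≥0}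

theorem diam_image_piece_le (h : IsSelfSimilar g r F) (hφ : LipschitzOnWith C φ F) (w : List ι) :
    Metric.diam (φ '' piece g F w) ≤ C * (wordRatio r w * Metric.diam F) := by
  refine Metric.diam_le_of_forall_dist_le (mul_nonneg C.coe_nonneg
    (mul_nonneg (h.wordRatio_pos w).le Metric.diam_nonneg)) ?_
  rintro _ ⟨x, hx, rfl⟩ _ ⟨y, hy, rfl⟩
  exact (hφ.dist_le_mul x (h.piece_subset w hx) y (h.piece_subset w hy)).trans
    (mul_le_mul_of_nonneg_left (h.dist_le_of_mem_piece hx hy) C.coe_nonneg)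

variable [MeasurableSpace X] [BorelSpace X] [MeasurableSpace Y] [BorelSpace Y] {s : ℝ}

theorem hausdorffMeasure_image_piece_le (h : IsSelfSimilar g r F) (hφ : LipschitzOnWith C φ F)
    (hs : 0 ≤ s) (w : List ι) :
    μH[s] (φ '' piece g F w) ≤ C ^ s * (ENNReal.ofReal (wordRatio r w ^ s) * μH[s] F) :=
  ((hφ.mono (h.piece_subset w)).hausdorffMeasure_image_le hs).trans
    (mul_le_mul_right (h.hausdorffMeasure_piece_le hs w) _)

theorem hausdorffMeasure_image_piece_ne_top (h : IsSelfSimilar g r F)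
    (hφ : LipschitzOnWith C φ F) (hs : 0 ≤ s) (htop : μH[s] F ≠ ⊤) (w : List ι) :
    μH[s] (φ '' piece g F w) ≠ ⊤ :=
  ne_top_of_le_ne_top (by finiteness) (h.hausdorffMeasure_image_piece_le hφ hs w)

theorem hausdorffMeasure_real_image_piece_le (h : IsSelfSimilar g r F)
    (hφ : LipschitzOnWith C φ F) (hs : 0 ≤ s) (htop : μH[s] F ≠ ⊤) (w : List ι) :
    (μH[s]).real (φ '' piece g F w) ≤
      C ^ s * (μH[s]).real F * wordRatio (fun j => r j ^ s) w := by
  have hle := ENNReal.toReal_mono (by finiteness) (h.hausdorffMeasure_image_piece_le hφ hs w)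
  rw [ENNReal.toReal_mul, ENNReal.toReal_mul,
    ENNReal.toReal_ofReal (Real.rpow_nonneg (h.wordRatio_pos w).le _), ← ENNReal.toReal_rpow,
    ENNReal.coe_toReal, mul_comm (wordRatio r w ^ s), ← mul_assoc] at hle
  rwa [wordRatio_rpow h.ratio_pos]

theorem hausdorffMeasure_real_image_piece_eq_sum [Fintype ι] (h : IsSelfSimilar g r F)
    (hdisj : Pairwise fun i j => Disjoint (g i '' F) (g j '' F)) (hφ : LipschitzOnWith C φ F)
    (hinj : InjOn φ F) (hs : 0 ≤ s) (htop : μH[s] F ≠ ⊤) (w : List ι) :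
    (μH[s]).real (φ '' piece g F w) = ∑ j, (μH[s]).real (φ '' piece g F (j :: w)) := by
  rw [h.piece_eq_iUnion_cons w, image_iUnion]
  refine measureReal_iUnion_fintype (fun i j hij => ?_) (fun j => ?_) fun j =>
    h.hausdorffMeasure_image_piece_ne_top hφ hs htop _
  · exact (h.disjoint_piece_cons hdisj w hij).image hinj (h.piece_subset _) (h.piece_subset _)
  · exact ((h.isCompact_piece _).image_of_continuousOn
      (hφ.continuousOn.mono (h.piece_subset _))).measurableSet

end IsSelfSimilar

end BiLipschitzImages

section Rigidity

variable {ι κ X : Type*} [MetricSpace X] {g : ι → X → X} {r : ι → ℝ} {F : Set X}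
  {lam : ℝ} {b : κ → ℝ} {E : Set ℝ} {φ : X → ℝ} {C : ℝ≥0}

theorem IsFiniteType.exists_finite_hausdorffMeasure_image_values [Finite ι]
    (hfin : IsFiniteType lam b) (hE : IsSelfSimilar (homothetyFamily lam b) (fun _ => lam) E)
    (hF : IsSelfSimilar g r F) (hdisj : Pairwise fun i j => Disjoint (g i '' F) (g j '' F))
    (hφ : LipschitzOnWith C φ F) (hφ' : AntilipschitzWith C (F.domRestrict φ)) (hφE : φ '' F = E)
    {s : ℝ} (hs : 0 ≤ s) : ∃ α ≥ 1, ∀ β, ∃ V : Set ℝ, V.Finite ∧ ∀ (w : List ι) (l : ℕ),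
      α * lam ^ l < wordRatio r w → wordRatio r w ≤ β * lam ^ l →
      ∃ a ∈ V, (μH[s]).real (φ '' piece g F w) = (lam ^ s) ^ l * a := by
  obtain ⟨δ, hδ, hsep⟩ := hF.exists_forall_mul_wordRatio_le_dist hdisj
  refine ⟨max 1 (C * Metric.diam E / δ), le_max_left _ _, fun β => ?_⟩
  obtain ⟨V, hV, hval⟩ := hfin.exists_finite_hausdorffMeasure_values hE hs
    (C * (β * Metric.diam F))
  have hl := fun l : ℕ => pow_pos hE.ratio_mem_of_const.1 l
  refine ⟨V, hV, fun w l hlow hup => hval l _ ?_ ((hF.nonempty_piece w).image φ) ?_ ?_⟩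
  · exact hφE ▸ image_mono (hF.piece_subset w)
  · rw [← hφE]
    rintro _ ⟨x, hx, rfl⟩ _ ⟨⟨y, hy, rfl⟩, hyw⟩
    refine lt_of_mul_lt_mul_left ?_ C.coe_nonneg
    calc C * (lam ^ l * Metric.diam (φ '' F))
        = δ * (C * Metric.diam E / δ * lam ^ l) := by rw [hφE]; field_simp
      _ ≤ δ * (max 1 (C * Metric.diam E / δ) * lam ^ l) :=
        mul_le_mul_of_nonneg_left
          (mul_le_mul_of_nonneg_right (le_max_right _ _) (hl l).le) hδ.le
      _ < δ * wordRatio r w := mul_lt_mul_of_pos_left hlow hδ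
      _ ≤ dist x y := hsep w x hx y ⟨hy, fun h => hyw (mem_image_of_mem φ h)⟩
      _ ≤ C * dist (φ x) (φ y) := hφ'.le_mul_dist ⟨x, hF.piece_subset w hx⟩ ⟨y, hy⟩
  · calc Metric.diam (φ '' piece g F w) ≤ C * (wordRatio r w * Metric.diam F) :=
        hF.diam_image_piece_le hφ w
      _ ≤ C * (β * lam ^ l * Metric.diam F) := by gcongr
      _ = C * (β * Metric.diam F) * lam ^ l := by ring

theorem IsSelfSimilar.exists_forall_wordRatio_near_pow [Finite ι] (h : IsSelfSimilar g r F)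
    (hlam : lam ∈ Ioo (0 : ℝ) 1) {α : ℝ} (hα : 1 ≤ α) : ∃ β, ∀ w, ∃ l : ℕ,
      (α * lam ^ l < wordRatio r w ∧ wordRatio r w ≤ β * lam ^ l) ∧
      ∀ j, α * lam ^ l < wordRatio r (j :: w) ∧ wordRatio r (j :: w) ≤ β * lam ^ l := by
  obtain ⟨c, hc, hcr⟩ := h.exists_forall_le_ratio
  have hα0 : 0 < α := one_pos.trans_le hα
  refine ⟨α / (c * lam), fun w => ?_⟩
  have hw := h.wordRatio_pos w
  have hw1 : wordRatio r w ≤ 1 := by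
    simpa using wordRatio_le_pow_length h.ratio_pos (fun j => (h.ratio_mem j).2.le) w
  obtain ⟨l, hlow, hup⟩ := exists_nat_pow_near_of_lt_one (x := c * wordRatio r w / α)
    (div_pos (mul_pos hc.1 hw) hα0)
    (div_le_one_of_le₀ ((mul_le_one₀ hc.2.le hw.le hw1).trans hα) hα0.le) hlam.1 hlam.2
  rw [lt_div_iff₀' hα0] at hlow
  rw [div_le_iff₀' hα0] at hup
  have hup' : wordRatio r w ≤ α / (c * lam) * lam ^ (l + 1) := by
    rw [pow_succ, div_mul_eq_mul_div, le_div_iff₀ (mul_pos hc.1 hlam.1)]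
    nlinarith [hlam.1]
  refine ⟨l + 1, ⟨hlow.trans_le (mul_le_of_le_one_left hw.le hc.2.le), hup'⟩, fun j => ?_⟩
  rw [wordRatio_cons]
  exact ⟨hlow.trans_le (mul_le_mul_of_nonneg_right (hcr j) hw.le),
    (mul_le_of_le_one_left hw.le (h.ratio_mem j).2.le).trans hup'⟩

theorem exists_rat_log_div_log_of_lipEquiv [Finite ι] [Nontrivial ι]
    (hF : IsSelfSimilar g r F) (hdisj : Pairwise fun i j => Disjoint (g i '' F) (g j '' F))
    (hE : IsSelfSimilar (homothetyFamily lam b) (fun _ => lam) E) (hfin : IsFiniteType lam b)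
    (hLip : LipEquiv E F) (j : ι) : ∃ q : ℚ, Real.log (r j) / Real.log lam = q := by
  cases nonempty_fintype ι
  borelize X
  have hlam := hE.ratio_mem_of_const
  obtain ⟨φ, C, hφ, hφ', hφE⟩ := hLip.exists_lipschitzOnWith_antilipschitzWith
  obtain ⟨s, hs, hsum⟩ := exists_sum_rpow_eq_one hF.ratio_mem
  have htop := (hF.hausdorffMeasure_lt_top hs hsum).ne
  obtain ⟨α, hα, hval⟩ :=
    hfin.exists_finite_hausdorffMeasure_image_values hE hF hdisj hφ hφ' hφE hs.le
  obtain ⟨β, hβ⟩ := hF.exists_forall_wordRatio_near_pow hlam hα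
  obtain ⟨V, hV, hval⟩ := hval β
  have hpos : 0 < (μH[s]).real (φ '' piece g F []) := by
    have hne := hF.hausdorffMeasure_image_piece_ne_top hφ hs.le htop []
    rw [piece, wordMap, image_id] at hne ⊢
    exact hausdorffMeasure_real_image_pos hφ' hs.le (hF.hausdorffMeasure_pos hdisj hs hsum) hne
  obtain ⟨q, hq⟩ := exists_rat_log_div_log_of_additive
    (fun j => Real.rpow_pos_of_pos (hF.ratio_pos j) s) hsum
    ⟨Real.rpow_pos_of_pos hlam.1 s, Real.rpow_lt_one hlam.1.le hlam.2 hs⟩ hpos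
    (hF.hausdorffMeasure_real_image_piece_eq_sum hdisj hφ
      (injOn_iff_injective.2 hφ'.injective) hs.le htop)
    (hF.hausdorffMeasure_real_image_piece_le hφ hs.le htop) hV
    (fun w => (hβ w).imp fun l hl => ⟨hval w l hl.1.1 hl.1.2,
      fun j => hval _ l (hl.2 j).1 (hl.2 j).2⟩) j
  rw [Real.log_rpow (hF.ratio_pos j), Real.log_rpow hlam.1, mul_div_mul_left _ _ hs.ne'] at hq
  exact ⟨q, hq⟩

theorem commensurable_ratios_of_lipEquiv_dustLike_general [Finite ι] [Nontrivial ι]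
    (hF : IsSelfSimilar g r F) (hdisj : Pairwise fun i j => Disjoint (g i '' F) (g j '' F))
    (hE : IsSelfSimilar (homothetyFamily lam b) (fun _ => lam) E) (hfin : IsFiniteType lam b)
    (hLip : LipEquiv E F) :
    (∃ r₀ : ℝ, r₀ ∈ Ioo (0 : ℝ) 1 ∧ ∃ k : ℕ, 0 < k ∧ ∃ ks : ι → ℕ,
      (∀ j, 0 < ks j) ∧ lam = r₀ ^ k ∧ ∀ j, r j = r₀ ^ ks j) ∧
    ∀ j, ∃ q : ℚ, Real.log (r j) / Real.log lam = (q : ℝ) :=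
  have hrat := exists_rat_log_div_log_of_lipEquiv hF hdisj hE hfin hLip
  ⟨exists_common_pow_of_rat_log_div_log hF.ratio_mem hE.ratio_mem_of_const hrat, hrat⟩

end Rigidity

end

/-- **Proposition 1.** If `E ∈ 𝒜(λ, n, m)` is Lipschitz equivalent to a
dust-like self-similar set `F = ⋃ⱼ gⱼ(F)` with ratios `rⱼ`, then there are `r ∈ (0,1)` and
positive integers `k`, `k₁, …, k_t` with `λ = r^k` and `rⱼ = r^(kⱼ)` for all `j`;
equivalently, `log rⱼ / log λ ∈ ℚ` for all `j`. -/
theorem commensurable_ratios_of_lipEquiv_dustLike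
    (lam : ℝ) (n m : ℕ) (E : Set ℝ) (hE : IsInClassA lam n m E)
    (d t : ℕ) (ht : 2 ≤ t)
    (F : Set (EuclideanSpace ℝ (Fin d)))
    (g : Fin t → EuclideanSpace ℝ (Fin d) → EuclideanSpace ℝ (Fin d))
    (r : Fin t → ℝ)
    (hr : ∀ j, r j ∈ Set.Ioo (0 : ℝ) 1)
    (hg : ∀ j x y, dist (g j x) (g j y) = r j * dist x y)
    (hFne : F.Nonempty) (hFc : IsCompact F)
    (hFattr : F = ⋃ j, g j '' F)
    (hsep : ∀ j j', j ≠ j' → Disjoint (g j '' F) (g j' '' F))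
    (hLip : LipEquiv E F) :
    (∃ r₀ : ℝ, r₀ ∈ Set.Ioo (0 : ℝ) 1 ∧ ∃ k : ℕ, 0 < k ∧ ∃ ks : Fin t → ℕ,
      (∀ j, 0 < ks j) ∧ lam = r₀ ^ k ∧ ∀ j, r j = r₀ ^ ks j) ∧
    ∀ j, ∃ q : ℚ, Real.log (r j) / Real.log lam = (q : ℝ) := by
  have : Nontrivial (Fin t) := Fin.nontrivial_iff_two_le.2 ht
  obtain ⟨b, hEb, hfin⟩ := hE.exists_isSelfSimilar_isFiniteType
  exact commensurable_ratios_of_lipEquiv_dustLike_general ⟨hr, hg, hFne, hFc, hFattr⟩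
    (fun j j' => hsep j j') hEb hfin hLip
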